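/- Let k be a field, let Q₁, Q₂, Q₃ be homogeneous degree-2 polynomials in k[u,v], and set P₁ = Q₂Q₃, P₂ = Q₁Q₃, P₃ = Q₁Q₂. Then det A_{P₁,P₂,P₃} = Res(Q₁,Q₂) · Res(Q₂,Q₃) · Res(Q₁,Q₃). -/

import Mathlib

open MvPolynomial

noncomputable section

/-- The coefficient of `u^i v^j` in a polynomial in `k[u,v]`
(variables `X 0 = u`, `X 1 = v`). -/
def coeffUV {k : Type*} [Field k] (i j : ℕ) (P : MvPolynomial (Fin 2) k) : k :=
  MvPolynomial.coeff (Finsupp.single 0 i + Finsupp.single 1 j) P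

/-- For homogeneous degree-4 polynomials `P₁, P₂, P₃` in `k[u,v]`, the `6×6` matrix
whose columns are the coefficient vectors of `u·P₁, v·P₁, u·P₂, v·P₂, u·P₃, v·P₃`
with respect to the basis `u⁵, u⁴v, u³v², u²v³, uv⁴, v⁵`. -/
def Amat {k : Type*} [Field k] (P₁ P₂ P₃ : MvPolynomial (Fin 2) k) :
    Matrix (Fin 6) (Fin 6) k :=
  Matrix.of fun i j =>
    coeffUV (5 - (i : ℕ)) (i : ℕ)
      ((![X 0 * P₁, X 1 * P₁, X 0 * P₂, X 1 * P₂, X 0 * P₃, X 1 * P₃] :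
          Fin 6 → MvPolynomial (Fin 2) k) j)

/-- The resultant of two binary quadratic forms
`Q = q₂u² + q₁uv + q₀v²` and `Q' = q₂'u² + q₁'uv + q₀'v²`:
`(q₂q₀' − q₀q₂')² − (q₂q₁' − q₁q₂')(q₁q₀' − q₀q₁')`. -/
def Res2 {k : Type*} [Field k] (Q Q' : MvPolynomial (Fin 2) k) : k :=
  (coeffUV 2 0 Q * coeffUV 0 2 Q' - coeffUV 0 2 Q * coeffUV 2 0 Q') ^ 2 -
    (coeffUV 2 0 Q * coeffUV 1 1 Q' - coeffUV 1 1 Q * coeffUV 2 0 Q') *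
      (coeffUV 1 1 Q * coeffUV 0 2 Q' - coeffUV 0 2 Q * coeffUV 1 1 Q')

/-!
Set `u = 1` and let `f, g, h` be the univariate polynomials obtained from `Q₁, Q₂, Q₃`. The matrix
`Amat (Q₂ * Q₃) (Q₁ * Q₃) (Q₁ * Q₂)` represents the linear map
`(p, q, r) ↦ p * (g * h) + q * (f * h) + r * (f * g)`. This map is the Sylvester map
`(p, q) ↦ p * g + q * f` of `f` and `g`, applied to the first two components, followed by the
Sylvester map `(s, r) ↦ s * h + r * (f * g)` of `f * g` and `h`. Hence its determinant is
`Res(f, g) * Res(f * g, h)`, and the resultant is multiplicative.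
-/

open scoped Polynomial

section Semiring

variable {R : Type*} [Semiring R]

theorem sylvester_castAdd (f : R[X]) {g : R[X]} {m n : ℕ} (hg : g.natDegree ≤ n)
    (i : Fin (m + n)) (j : Fin m) :
    f.sylvester g m n i (j.castAdd n) = (Polynomial.X ^ (j : ℕ) * g).coeff i := by
  simp only [Polynomial.sylvester, Matrix.of_apply, Fin.addCases_left, Set.mem_Icc,
    Polynomial.coeff_X_pow_mul']
  grind [Polynomial.coeff_eq_zero_of_natDegree_lt]

theorem sylvester_natAdd {f : R[X]} (g : R[X]) {m n : ℕ} (hf : f.natDegree ≤ m)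
    (i : Fin (m + n)) (j : Fin n) :
    f.sylvester g m n i (j.natAdd m) = (Polynomial.X ^ (j : ℕ) * f).coeff i := by
  simp only [Polynomial.sylvester, Matrix.of_apply, Fin.addCases_right, Set.mem_Icc,
    Polynomial.coeff_X_pow_mul']
  grind [Polynomial.coeff_eq_zero_of_natDegree_lt]

end Semiring

section CommSemiring

variable {R : Type*} [CommSemiring R]

/-- The dehomogenization of a binary form in `u = X 0` and `v = X 1` at `u = 1`. Setting `u = 1`
rather than `v = 1` makes the monomial basis `u^d, u^(d-1)v, …, v^d` correspond to `1, X, …, X^d`,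
the order of the rows of `Amat` and of `Polynomial.sylvester`. -/
def dehomogenize : MvPolynomial (Fin 2) R →ₐ[R] R[X] :=
  aeval ![1, Polynomial.X]

@[simp]
theorem dehomogenize_X_zero : dehomogenize (X 0 : MvPolynomial (Fin 2) R) = 1 := by
  simp [dehomogenize]

@[simp]
theorem dehomogenize_X_one : dehomogenize (X 1 : MvPolynomial (Fin 2) R) = Polynomial.X := by
  simp [dehomogenize]

theorem coeff_dehomogenize {F : MvPolynomial (Fin 2) R} {a b d : ℕ} (hF : F.IsHomogeneous d)
    (hd : a + b = d) :
    (dehomogenize F).coeff b = F.coeff (Finsupp.single 0 a + Finsupp.single 1 b) := by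
  have hsum : (dehomogenize F).coeff b =
      ∑ m ∈ F.support, if m 1 = b then F.coeff m else 0 := by
    simp [dehomogenize, aeval_def, eval₂_eq', Polynomial.finsetSum_coeff,
      Polynomial.algebraMap_eq, Polynomial.coeff_X_pow, eq_comm]
  have hexp : ∀ m ∈ F.support, m 1 = b → m = Finsupp.single 0 a + Finsupp.single 1 b := by
    intro m hm hb
    have hdeg : m 0 + m 1 = d := by
      simpa [Finsupp.degree_eq_sum] using
        of_not_not (mt hF.coeff_eq_zero (mem_support_iff.mp hm))
    ext t
    fin_cases t
    · simpa using (by lia : m 0 = a)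
    · simpa using hb
  rw [hsum, Finset.sum_eq_single (Finsupp.single 0 a + Finsupp.single 1 b)]
  · simp
  · exact fun m hm hne => if_neg fun hb => hne (hexp m hm hb)
  · simp +contextual

theorem natDegree_dehomogenize_le {F : MvPolynomial (Fin 2) R} {d : ℕ} (hF : F.IsHomogeneous d) :
    (dehomogenize F).natDegree ≤ d := by
  have hvars : ∀ t, (![1, Polynomial.X] t : R[X]).natDegree ≤ 1 :=
    Fin.forall_fin_two.mpr ⟨by simp, Polynomial.natDegree_X_le⟩
  simpa [dehomogenize] using aeval_natDegree_le F hF.totalDegree_le _ hvars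

theorem sum_coeff_mul_coeff_X_pow_mul {p : R[X]} {n : ℕ} (hp : p.natDegree < n) (q : R[X])
    (i : ℕ) :
    ∑ j : Fin n, (Polynomial.X ^ (j : ℕ) * q).coeff i * p.coeff j = (p * q).coeff i := by
  calc ∑ j : Fin n, (Polynomial.X ^ (j : ℕ) * q).coeff i * p.coeff j
      = ∑ j : Fin n, (Polynomial.monomial j (p.coeff j) * q).coeff i := by
        simp only [← Polynomial.C_mul_X_pow_eq_monomial, mul_assoc, Polynomial.coeff_C_mul,
          mul_comm (p.coeff _)]
    _ = ((∑ j ∈ Finset.range n, Polynomial.monomial j (p.coeff j)) * q).coeff i := by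
        rw [Fin.sum_univ_eq_sum_range fun j => (Polynomial.monomial j (p.coeff j) * q).coeff i,
          Finset.sum_mul, Polynomial.finsetSum_coeff]
    _ = (p * q).coeff i := by rw [← p.as_sum_range' n hp]

/-- The matrix of the linear map `(p, q, r) ↦ p * (g * h) + q * (f * h) + r * (f * g)` on triples
of polynomials of degrees less than `l`, `m`, `n`, in the monomial bases. As for
`Polynomial.sylvester`, the formal degrees `l`, `m`, `n` of `f`, `g`, `h` are parameters. -/
def sylvesterTriple (f g h : R[X]) (l m n : ℕ) : Matrix (Fin (l + m + n)) (Fin (l + m + n)) R :=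
  .of fun i j => Polynomial.coeff
    (j.addCases
      (Fin.addCases (fun a => Polynomial.X ^ (a : ℕ) * (g * h))
        (fun b => Polynomial.X ^ (b : ℕ) * (f * h)))
      (fun c => Polynomial.X ^ (c : ℕ) * (f * g))) i

theorem sylvesterTriple_eq_mul {f g h : R[X]} {l m n : ℕ} (hf : f.natDegree ≤ l)
    (hg : g.natDegree ≤ m) (hh : h.natDegree ≤ n) :
    sylvesterTriple f g h l m n = (f * g).sylvester h (l + m) n *
      (Matrix.fromBlocks (f.sylvester g l m) 0 0 1).reindex finSumFinEquiv finSumFinEquiv := by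
  have hfg : (f * g).natDegree ≤ l + m := Polynomial.natDegree_mul_le_of_le hf hg
  have hshift {p : R[X]} {a d : ℕ} (hp : p.natDegree ≤ d) (ha : a + d < l + m) :
      (Polynomial.X ^ a * p).natDegree < l + m :=
    (Polynomial.natDegree_mul_le_of_le (Polynomial.natDegree_X_pow_le a) hp).trans_lt ha
  ext i k
  rw [Matrix.mul_apply, Fin.sum_univ_add]
  induction k using Fin.addCases with
  | left k =>
    induction k using Fin.addCases with
    | left a =>
      have hp : (Polynomial.X ^ (a : ℕ) * g).natDegree < l + m := hshift hg (by lia)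
      simp [sylvesterTriple, sylvester_castAdd _ hh, sylvester_castAdd _ hg,
        sum_coeff_mul_coeff_X_pow_mul hp, mul_assoc]
    | right b =>
      have hp : (Polynomial.X ^ (b : ℕ) * f).natDegree < l + m := hshift hf (by lia)
      simp [sylvesterTriple, sylvester_castAdd _ hh, sylvester_natAdd _ hf,
        sum_coeff_mul_coeff_X_pow_mul hp, mul_assoc]
  | right c =>
    simp [sylvesterTriple, sylvester_natAdd _ hfg, Matrix.one_apply]

end CommSemiring

section CommRing

variable {R : Type*} [CommRing R]

/-- `Polynomial.resultant_mul_left` covers only `m₁ = f₁.natDegree` and `m₂ = f₂.natDegree`; a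
larger formal degree multiplies both sides by the same power of `(-1) ^ n * g.coeff n`. -/
theorem resultant_mul_left_of_natDegree_le {f₁ f₂ g : R[X]} {m₁ m₂ n : ℕ}
    (h₁ : f₁.natDegree ≤ m₁) (h₂ : f₂.natDegree ≤ m₂) (hg : g.natDegree ≤ n) :
    (f₁ * f₂).resultant g (m₁ + m₂) n = f₁.resultant g m₁ n * f₂.resultant g m₂ n := by
  obtain ⟨k₁, rfl⟩ := exists_add_of_le h₁
  obtain ⟨k₂, rfl⟩ := exists_add_of_le h₂
  rw [add_add_add_comm, Polynomial.resultant_add_left_deg _ _ _ _ _ Polynomial.natDegree_mul_le,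
    Polynomial.resultant_add_left_deg _ _ _ _ _ le_rfl,
    Polynomial.resultant_add_left_deg _ _ _ _ _ le_rfl, Polynomial.resultant_mul_left _ _ _ _ hg]
  ring

theorem resultant_two_two (f g : R[X]) :
    f.resultant g 2 2 = (f.coeff 2 * g.coeff 0 - f.coeff 0 * g.coeff 2) ^ 2 -
      (f.coeff 2 * g.coeff 1 - f.coeff 1 * g.coeff 2) *
        (f.coeff 1 * g.coeff 0 - f.coeff 0 * g.coeff 1) := by
  have hsyl : f.sylvester g 2 2 =
      !![g.coeff 0, 0, f.coeff 0, 0;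
         g.coeff 1, g.coeff 0, f.coeff 1, f.coeff 0;
         g.coeff 2, g.coeff 1, f.coeff 2, f.coeff 1;
         0, g.coeff 2, 0, f.coeff 2] := by
    ext i j
    fin_cases i <;> fin_cases j <;> simp [Polynomial.sylvester, Fin.addCases]
  have hlaplace : (f.sylvester g 2 2).det =
      g.coeff 0 * !![g.coeff 0, f.coeff 1, f.coeff 0;
                     g.coeff 1, f.coeff 2, f.coeff 1;
                     g.coeff 2, 0, f.coeff 2].det +
      f.coeff 0 * !![g.coeff 1, g.coeff 0, f.coeff 0;
                     g.coeff 2, g.coeff 1, f.coeff 1;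
                     0, g.coeff 2, f.coeff 2].det := by
    simp [hsyl, Matrix.det_succ_row_zero (n := 3), Fin.sum_univ_four, Matrix.det_fin_three,
      Fin.succAbove]
  simp only [Polynomial.resultant, hlaplace, Matrix.det_fin_three, Matrix.of_apply,
    Matrix.cons_val]
  ring

theorem stmt0_general {f g h : R[X]} {l m n : ℕ} (hf : f.natDegree ≤ l) (hg : g.natDegree ≤ m)
    (hh : h.natDegree ≤ n) :
    (sylvesterTriple f g h l m n).det =
      f.resultant g l m * g.resultant h m n * f.resultant h l n := by
  calc (sylvesterTriple f g h l m n).det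
      = (f * g).resultant h (l + m) n * f.resultant g l m := by
        rw [sylvesterTriple_eq_mul hf hg hh, Matrix.det_mul, Matrix.det_reindex_self,
          Matrix.det_fromBlocks_zero₂₁, Matrix.det_one, mul_one, Polynomial.resultant,
          Polynomial.resultant]
    _ = f.resultant g l m * g.resultant h m n * f.resultant h l n := by
        rw [resultant_mul_left_of_natDegree_le hf hg hh]
        ring

end CommRing

section Field

variable {k : Type*} [Field k]

theorem Res2_eq_resultant {Q Q' : MvPolynomial (Fin 2) k} (hQ : Q.IsHomogeneous 2)
    (hQ' : Q'.IsHomogeneous 2) :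
    Res2 Q Q' = (dehomogenize Q).resultant (dehomogenize Q') 2 2 := by
  simp only [Res2, coeffUV, resultant_two_two, ← coeff_dehomogenize hQ, ← coeff_dehomogenize hQ',
    Nat.reduceAdd]
  ring

theorem Amat_mul_eq_sylvesterTriple {Q₁ Q₂ Q₃ : MvPolynomial (Fin 2) k} (h₁ : Q₁.IsHomogeneous 2)
    (h₂ : Q₂.IsHomogeneous 2) (h₃ : Q₃.IsHomogeneous 2) :
    Amat (Q₂ * Q₃) (Q₁ * Q₃) (Q₁ * Q₂) =
      sylvesterTriple (dehomogenize Q₁) (dehomogenize Q₂) (dehomogenize Q₃) 2 2 2 := by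
  have hcoeff {P : MvPolynomial (Fin 2) k} (hP : P.IsHomogeneous 4) (t : Fin 2) (i : Fin 6) :
      coeffUV (5 - (i : ℕ)) i (X t * P) = (dehomogenize (X t * P)).coeff i :=
    (coeff_dehomogenize ((isHomogeneous_X k t).mul hP) (by lia)).symm
  ext i j
  fin_cases j <;>
    simp [Amat, sylvesterTriple, Fin.addCases, hcoeff (h₂.mul h₃), hcoeff (h₁.mul h₃),
      hcoeff (h₁.mul h₂)]

end Field

/-- Proposition `res=det`: if `P₁ = Q₂Q₃`, `P₂ = Q₁Q₃`, `P₃ = Q₁Q₂`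
for homogeneous degree-2 polynomials `Q₁, Q₂, Q₃`, then
`det A_{P₁,P₂,P₃} = Res(Q₁,Q₂) · Res(Q₂,Q₃) · Res(Q₁,Q₃)`. -/
theorem stmt0 {k : Type*} [Field k] (Q₁ Q₂ Q₃ : MvPolynomial (Fin 2) k)
    (h₁ : Q₁.IsHomogeneous 2) (h₂ : Q₂.IsHomogeneous 2) (h₃ : Q₃.IsHomogeneous 2) :
    (Amat (Q₂ * Q₃) (Q₁ * Q₃) (Q₁ * Q₂)).det =
      Res2 Q₁ Q₂ * Res2 Q₂ Q₃ * Res2 Q₁ Q₃ := by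
  rw [Amat_mul_eq_sylvesterTriple h₁ h₂ h₃, stmt0_general (natDegree_dehomogenize_le h₁)
    (natDegree_dehomogenize_le h₂) (natDegree_dehomogenize_le h₃), Res2_eq_resultant h₁ h₂,
    Res2_eq_resultant h₂ h₃, Res2_eq_resultant h₁ h₃]
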